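/- Let n ≥ 1, let A ∈ ℂ^{n×n} be positive-imaginary, and let 0 ≤ r ≤ n. Then the minimum of the largest canonical phase φ₁(E⁻¹AE⁻¹) over all sectorial matrices E ∈ ℂ^{n×n} such that prank(E) ≤ r and E⁻¹AE⁻¹ is positive-imaginary equals φ_{r+1}(A), and this minimum is attained at every Ê ∈ S_p(A,r). -/

import Mathlib

noncomputable section

open Matrix
open scoped Classical ComplexOrder

namespace LowPrank

variable {n : ℕ}

/-- A matrix is sectorial if its numerical range does not contain `0`
(`star x ⬝ᵥ x = 1` encodes `‖x‖₂ = 1`). -/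
def IsSectorial (A : Matrix (Fin n) (Fin n) ℂ) : Prop :=
  ∀ x : Fin n → ℂ, star x ⬝ᵥ x = 1 → star x ⬝ᵥ A.mulVec x ≠ 0

/-- The diagonal unitary matrix `diag (e^{iφ₁}, …, e^{iφₙ})`. -/
def phaseDiag (φ : Fin n → ℝ) : Matrix (Fin n) (Fin n) ℂ :=
  Matrix.diagonal fun k => Complex.exp (Complex.I * (φ k : ℂ))

/-- `A = Tᴴ diag (e^{iφ₁}, …, e^{iφₙ}) T` with `T` invertible. -/
def IsSectorialDecomp (A T : Matrix (Fin n) (Fin n) ℂ) (φ : Fin n → ℝ) : Prop :=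
  IsUnit T ∧ A = Tᴴ * phaseDiag φ * T

/-- `φ` is the (sorted, normalized) vector of canonical phases of `A`:
nonincreasing, spread `< π`, midpoint of the range in `(-π, π]`, and realizing a
sectorial decomposition of `A`. -/
def IsCanonicalPhases (A : Matrix (Fin n) (Fin n) ℂ) (φ : Fin n → ℝ) : Prop :=
  Antitone φ ∧ (∀ i j, φ i - φ j < Real.pi) ∧
    (-Real.pi < ((⨆ i, φ i) + ⨅ i, φ i) / 2) ∧ (((⨆ i, φ i) + ⨅ i, φ i) / 2 ≤ Real.pi) ∧
    ∃ T, IsSectorialDecomp A T φ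

/-- The canonical phases `φ₁(A) ≥ ⋯ ≥ φₙ(A)` of a sectorial matrix
(`phases A k` is the `(k+1)`-st largest canonical phase). -/
noncomputable def phases (A : Matrix (Fin n) (Fin n) ℂ) : Fin n → ℝ :=
  if h : ∃ φ, IsCanonicalPhases A φ then h.choose else 0

/-- The phase-rank: the number of nonzero canonical phases. -/
noncomputable def prank (A : Matrix (Fin n) (Fin n) ℂ) : ℕ :=
  {k : Fin n | phases A k ≠ 0}.ncard

/-- Positive-imaginary: sectorial with all canonical phases in `[0, π)`. -/
def PositiveImaginary (A : Matrix (Fin n) (Fin n) ℂ) : Prop :=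
  IsSectorial A ∧ ∀ k, phases A k ∈ Set.Ico 0 Real.pi

/-- Symmetric gauge function. -/
structure IsSymmetricGauge (Φ : (Fin n → ℝ) → ℝ) : Prop where
  pos : ∀ x, x ≠ 0 → 0 < Φ x
  smul : ∀ (ρ : ℝ) (x), Φ (ρ • x) = |ρ| * Φ x
  subadd : ∀ x y, Φ (x + y) ≤ Φ x + Φ y
  perm : ∀ (σ : Equiv.Perm (Fin n)) (x), Φ (x ∘ σ) = Φ x
  abs : ∀ x, Φ (fun k => |x k|) = Φ x

/-- The set `S_p(A, r)` of `r`-half-truncations of `A`. -/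
def Sp (A : Matrix (Fin n) (Fin n) ℂ) (r : ℕ) : Set (Matrix (Fin n) (Fin n) ℂ) :=
  {E | ∃ T, IsSectorialDecomp A T (phases A) ∧
    E = Tᴴ * Matrix.diagonal (fun k : Fin n =>
      if (k : ℕ) < r then Complex.exp (Complex.I * ((phases A k / 2 : ℝ) : ℂ)) else 1) * T}

/-!
A sectorial decomposition `A = Tᴴ D T` writes `x* A x = ∑ |(T x)ₖ|² e^{iφₖ}`, a number whose
argument lies between the least and the greatest `φₖ` with `(T x)ₖ ≠ 0`. So phases obey
Courant–Fischer arguments, with arguments of quadratic forms in place of Rayleigh quotients.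

Let `B = E⁻¹ A E⁻¹`. If `prank E ≤ r`, then `E` and `Eᴴ` agree on a subspace of codimension at most
`r`, and there `x* A x = (E x)* B (E x)`. This subspace meets the one on which `x* A x` only
involves `φ₁(A), …, φ_{r+1}(A)`, and comparing arguments gives `φ_{r+1}(A) ≤ φ₁(B)`. For
`E ∈ Sp A r`, all of `A`, `E` and `B` are diagonalized by congruence with the same `T` (for `B`,
with `(Tᴴ)⁻¹`), and the phases of `B` are those of `A` with the `r` largest replaced by `0`.

The same comparison with `E = 1` shows that canonical phases are unique. They exist because by the
Toeplitz–Hausdorff theorem a sectorial matrix has, after a rotation, a positive definite Hermitian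
part, which is then diagonalized by congruence simultaneously with the skew-Hermitian part.
-/

section Sector

variable {a b a' b' : ℝ} {z : ℂ}

/-- The circular sector of nonzero complex numbers having an argument in `[a, b]`. Arguments are
arbitrary reals, not principal values, so the sector may cross the negative real axis. -/
def sector (a b : ℝ) : Set ℂ :=
  {z | ∃ ρ > 0, ∃ θ ∈ Set.Icc a b, z = (ρ : ℝ) * Complex.exp (Complex.I * (θ : ℝ))}

lemma ne_zero_of_mem_sector (hz : z ∈ sector a b) : z ≠ 0 := by
  obtain ⟨ρ, hρ, θ, -, rfl⟩ := hz
  exact mul_ne_zero (mod_cast hρ.ne') (Complex.exp_ne_zero _)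

lemma exists_arg_eq_add_of_mem_sector (hz : z ∈ sector a b) (hz' : z ∈ sector a' b') :
    ∃ θ ∈ Set.Icc a b, ∃ θ' ∈ Set.Icc a' b', ∃ p : ℤ, θ = θ' + p * (2 * Real.pi) := by
  obtain ⟨ρ, hρ, θ, hθ, rfl⟩ := hz
  obtain ⟨ρ', hρ', θ', hθ', h⟩ := hz'
  have hnorm : ρ = ρ' := by
    simpa [mul_comm Complex.I, Complex.norm_exp_ofReal_mul_I, abs_of_pos hρ, abs_of_pos hρ']
      using congrArg norm h
  subst hnorm
  obtain ⟨p, hp⟩ := Complex.exp_eq_exp_iff_exists_int.1 (mul_left_cancel₀ (mod_cast hρ.ne') h)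
  refine ⟨θ, hθ, θ', hθ', p, ?_⟩
  have : (θ : ℂ) = θ' + p * (2 * Real.pi) :=
    mul_left_cancel₀ Complex.I_ne_zero (hp.trans (by ring))
  exact_mod_cast this

lemma exists_int_abs_sub_lt_of_mem_sector (hz : z ∈ sector a b) (hz' : z ∈ sector a' b')
    (hab : b - a < Real.pi) (hab' : b' - a' < Real.pi) :
    ∃ p : ℤ, ∀ s ∈ Set.Icc a b, ∀ t ∈ Set.Icc a' b',
      |s - (t + p * (2 * Real.pi))| < 2 * Real.pi := by
  obtain ⟨θ, ⟨_, _⟩, θ', ⟨_, _⟩, p, hp⟩ := exists_arg_eq_add_of_mem_sector hz hz'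
  refine ⟨p, fun s ⟨_, _⟩ t ⟨_, _⟩ => ?_⟩
  rw [abs_lt]
  constructor <;> linarith

lemma left_le_right_of_mem_sector (hz : z ∈ sector a b) (hz' : z ∈ sector a' b')
    (h : b - a' < 2 * Real.pi) (h' : b' - a < 2 * Real.pi) : a ≤ b' := by
  obtain ⟨θ, ⟨_, _⟩, θ', ⟨_, _⟩, p, hp⟩ := exists_arg_eq_add_of_mem_sector hz hz'
  have hp_lt : |(p : ℝ)| < 1 :=
    abs_lt.2 ⟨by nlinarith [Real.pi_pos], by nlinarith [Real.pi_pos]⟩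
  have hp0 : p = 0 := Int.abs_lt_one_iff.1 (mod_cast hp_lt)
  simp only [hp0, Int.cast_zero, zero_mul, add_zero] at hp
  linarith

lemma mem_sector_of_re_pos (hab : a ≤ b)
    (hmid : 0 < (Complex.exp (-(Complex.I * ((a + b) / 2 : ℝ))) * z).re)
    (ha : 0 ≤ (Complex.exp (-(Complex.I * a)) * z).im)
    (hb : (Complex.exp (-(Complex.I * b)) * z).im ≤ 0) : z ∈ sector a b := by
  set ζ := Complex.exp (-(Complex.I * ((a + b) / 2 : ℝ))) * z with hζ
  have hζ0 : 0 < ‖ζ‖ := norm_pos_iff.2 fun h => by simp [h] at hmid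
  have hz : z = ‖ζ‖ * Complex.exp (Complex.I * ((a + b) / 2 + ζ.arg : ℝ)) := by
    rw [Complex.ofReal_add, mul_add, Complex.exp_add, mul_left_comm, mul_comm Complex.I ζ.arg,
      Complex.norm_mul_exp_arg_mul_I, hζ, ← mul_assoc, ← Complex.exp_add]
    simp
  have him (c : ℝ) : (Complex.exp (-(Complex.I * c)) * z).im =
      ‖ζ‖ * Real.sin ((a + b) / 2 + ζ.arg - c) := by
    rw [hz, mul_left_comm, ← Complex.exp_add, Complex.im_ofReal_mul,
      ← Complex.exp_ofReal_mul_I_im]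
    congr 3
    push_cast
    ring
  obtain ⟨_, _⟩ := abs_lt.1 (Complex.abs_arg_lt_pi_div_two_iff.2 (.inl hmid))
  refine ⟨‖ζ‖, hζ0, _, ⟨?_, ?_⟩, hz⟩
  · by_contra! hlt
    have := Real.sin_neg_of_neg_of_neg_pi_lt (x := (a + b) / 2 + ζ.arg - a)
      (by linarith) (by linarith)
    exact (mul_neg_of_pos_of_neg hζ0 this).not_ge (him a ▸ ha)
  · by_contra! hlt
    have := Real.sin_pos_of_pos_of_lt_pi (x := (a + b) / 2 + ζ.arg - b)
      (by linarith) (by linarith)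
    exact (mul_pos hζ0 this).not_ge (him b ▸ hb)

lemma sum_mul_exp_mem_sector {ι : Type*} {s : Finset ι} {w φ : ι → ℝ} (hπ : b - a < Real.pi)
    (hw : ∀ j ∈ s, 0 ≤ w j) (hpos : ∃ j ∈ s, 0 < w j)
    (hφ : ∀ j ∈ s, 0 < w j → φ j ∈ Set.Icc a b) :
    ∑ j ∈ s, (w j : ℂ) * Complex.exp (Complex.I * φ j) ∈ sector a b := by
  have hrot (c : ℝ) : Complex.exp (-(Complex.I * c)) *
      ∑ j ∈ s, (w j : ℂ) * Complex.exp (Complex.I * φ j) =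
        ∑ j ∈ s, (w j : ℂ) * Complex.exp ((φ j - c : ℝ) * Complex.I) := by
    rw [Finset.mul_sum]
    refine Finset.sum_congr rfl fun j _ => ?_
    rw [mul_left_comm, ← Complex.exp_add]
    congr 2
    push_cast
    ring
  obtain ⟨i, hi, hwi⟩ := hpos
  obtain ⟨hai, hib⟩ := hφ i hi hwi
  have hcos {j : ι} (hj : j ∈ s) (hwj : 0 < w j) : 0 < Real.cos (φ j - (a + b) / 2) := by
    obtain ⟨_, _⟩ := hφ j hj hwj
    exact Real.cos_pos_of_mem_Ioo ⟨by linarith, by linarith⟩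
  apply mem_sector_of_re_pos (hai.trans hib)
  · simp only [hrot, Complex.re_sum, Complex.re_ofReal_mul, Complex.exp_ofReal_mul_I_re]
    refine Finset.sum_pos' (fun j hj => ?_) ⟨i, hi, mul_pos hwi (hcos hi hwi)⟩
    obtain hwj | hwj := (hw j hj).eq_or_lt
    · simp [← hwj]
    · exact (mul_pos hwj (hcos hj hwj)).le
  · simp only [hrot, Complex.im_sum, Complex.im_ofReal_mul, Complex.exp_ofReal_mul_I_im]
    refine Finset.sum_nonneg fun j hj => ?_
    obtain hwj | hwj := (hw j hj).eq_or_lt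
    · simp [← hwj]
    · obtain ⟨_, _⟩ := hφ j hj hwj
      exact mul_nonneg hwj.le
        (Real.sin_nonneg_of_nonneg_of_le_pi (by linarith) (by linarith))
  · simp only [hrot, Complex.im_sum, Complex.im_ofReal_mul, Complex.exp_ofReal_mul_I_im]
    refine Finset.sum_nonpos fun j hj => ?_
    obtain hwj | hwj := (hw j hj).eq_or_lt
    · simp [← hwj]
    · obtain ⟨_, _⟩ := hφ j hj hwj
      exact mul_nonpos_of_nonneg_of_nonpos hwj.le
        (Real.sin_nonpos_of_nonpos_of_neg_pi_le (by linarith) (by linarith))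

end Sector

section NumericalRange

variable {E : Type*} [NormedAddCommGroup E] [InnerProductSpace ℂ E]

/-- The numerical range of a linear operator on a complex inner product space. For the operator
`toEuclideanLin A` of a matrix it is `W(A)`, so that `A` is sectorial iff `0` is not in it. -/
def numericalRange (T : E →ₗ[ℂ] E) : Set ℂ :=
  {z | ∃ x : E, ‖x‖ = 1 ∧ inner ℂ x (T x) = z}

lemma inner_div_norm_sq_mem_numericalRange (T : E →ₗ[ℂ] E) {x : E} (hx : x ≠ 0) :
    inner ℂ x (T x) / (‖x‖ : ℂ) ^ 2 ∈ numericalRange T := by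
  refine ⟨(‖x‖⁻¹ : ℂ) • x, ?_, ?_⟩
  · simpa using norm_smul_inv_norm (𝕜 := ℂ) hx
  · rw [map_smul, inner_smul_left, inner_smul_right, map_inv₀, Complex.conj_ofReal]
    ring

lemma exists_norm_eq_one_im_mul_add_conj_mul_eq_zero (p q : ℂ) :
    ∃ w : ℂ, ‖w‖ = 1 ∧ (w * p + starRingEnd ℂ w * q).im = 0 := by
  obtain ⟨w, hw, h⟩ := Complex.exists_norm_eq_mul_self (p - starRingEnd ℂ q)
  refine ⟨w, hw, ?_⟩
  have him : (w * (p - starRingEnd ℂ q)).im = 0 := by rw [← h, Complex.ofReal_im]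
  simp only [Complex.add_im, Complex.mul_im, Complex.sub_re, Complex.sub_im,
    Complex.conj_re, Complex.conj_im] at him ⊢
  linarith

lemma exists_sq_add_mul_sub_one_eq_zero (l : ℝ) : ∃ s : ℝ, s ^ 2 + l * s - 1 = 0 := by
  refine ⟨(-l + √(l ^ 2 + 4)) / 2, ?_⟩
  have := Real.sq_sqrt (show 0 ≤ l ^ 2 + 4 by positivity)
  nlinarith

/-- Normalizing to `⟪x, T x⟫ = 1` and `⟪y, T y⟫ = -1`, a rotation of `y` makes the cross term of
`s ↦ ⟪s x + w y, T (s x + w y)⟫` real, which leaves the quadratic `s ^ 2 + l s - 1` with real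
roots. -/
lemma exists_inner_eq_zero_of_inner_add_inner_eq_zero (T : E →ₗ[ℂ] E) {x y : E} (hx : x ≠ 0)
    (h : inner ℂ x (T x) + inner ℂ y (T y) = 0) : ∃ z ≠ 0, inner ℂ z (T z) = 0 := by
  set a := inner ℂ x (T x) with ha
  obtain ha0 | ha0 := eq_or_ne a 0
  · exact ⟨x, hx, ha0⟩
  obtain ⟨w, hw, him⟩ := exists_norm_eq_one_im_mul_add_conj_mul_eq_zero
    (inner ℂ x (T y) / a) (inner ℂ y (T x) / a)
  obtain ⟨l, hl⟩ : ∃ l : ℝ,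
      (l : ℂ) = w * (inner ℂ x (T y) / a) + starRingEnd ℂ w * (inner ℂ y (T x) / a) :=
    ⟨_, Complex.ext rfl him.symm⟩
  have hww : starRingEnd ℂ w * w = 1 := by simp [Complex.conj_mul', hw]
  have hcross : w * inner ℂ x (T y) + starRingEnd ℂ w * inner ℂ y (T x) = l * a := by
    rw [hl]
    field_simp
  obtain ⟨s, hs⟩ := exists_sq_add_mul_sub_one_eq_zero l
  refine ⟨(s : ℂ) • x + w • y, fun hz => ha0 ?_, ?_⟩
  · have hy : inner ℂ (w • y) (T (w • y)) = (s : ℂ) ^ 2 * a := by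
      rw [eq_neg_of_add_eq_zero_right hz]
      simp only [map_neg, map_smul, inner_neg_neg, inner_smul_left, inner_smul_right,
        Complex.conj_ofReal, ha]
      ring
    simp only [map_smul, inner_smul_left, inner_smul_right] at hy
    have hmul : ((s ^ 2 + 1 : ℝ) : ℂ) * a = 0 := by
      push_cast
      linear_combination h - hy + inner ℂ y (T y) * hww
    exact (mul_eq_zero.1 hmul).resolve_left (mod_cast (by positivity : s ^ 2 + 1 ≠ 0))
  · have hs' : (s : ℂ) ^ 2 + l * s - 1 = 0 := mod_cast hs
    simp only [map_add, map_smul, inner_add_left, inner_add_right, inner_smul_left,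
      inner_smul_right, Complex.conj_ofReal]
    linear_combination h + a * hs' + inner ℂ y (T y) * hww + s * hcross

theorem convex_numericalRange (T : E →ₗ[ℂ] E) : Convex ℝ (numericalRange T) := by
  rw [convex_iff_forall_pos]
  rintro _ ⟨x, hx, rfl⟩ _ ⟨y, hy, rfl⟩ s t hs ht hst
  set c := s • inner ℂ x (T x) + t • inner ℂ y (T y) with hc
  let S : E →ₗ[ℂ] E := T - c • LinearMap.id
  have hshift (v : E) : inner ℂ v (S v) = inner ℂ v (T v) - c * (‖v‖ : ℂ) ^ 2 := by
    simp [S, inner_self_eq_norm_sq_to_K]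
  have hscale {r : ℝ} (hr : 0 < r) {v : E} (hv : ‖v‖ = 1) :
      inner ℂ ((√r : ℂ) • v) (S ((√r : ℂ) • v)) = r * (inner ℂ v (T v) - c) := by
    rw [map_smul, inner_smul_left, inner_smul_right, hshift, hv, Complex.conj_ofReal,
      ← mul_assoc, ← Complex.ofReal_mul, Real.mul_self_sqrt hr.le]
    simp
  have hx0 : (√s : ℂ) • x ≠ 0 :=
    smul_ne_zero (mod_cast (Real.sqrt_pos.2 hs).ne') (norm_ne_zero_iff.1 (hx ▸ one_ne_zero))
  have hsum : inner ℂ ((√s : ℂ) • x) (S ((√s : ℂ) • x)) +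
      inner ℂ ((√t : ℂ) • y) (S ((√t : ℂ) • y)) = 0 := by
    have hst' : (s : ℂ) + t = 1 := mod_cast hst
    rw [hscale hs hx, hscale ht hy]
    simp only [Complex.real_smul] at hc
    linear_combination -hc - c * hst'
  obtain ⟨z, hz, hz0⟩ := exists_inner_eq_zero_of_inner_add_inner_eq_zero S hx0 hsum
  rw [hshift, sub_eq_zero] at hz0
  have hzn : (‖z‖ : ℂ) ^ 2 ≠ 0 := by simpa using hz
  simpa [hz0, hzn] using inner_div_norm_sq_mem_numericalRange T hz

lemma isCompact_numericalRange [FiniteDimensional ℂ E] (T : E →ₗ[ℂ] E) :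
    IsCompact (numericalRange T) := by
  have := FiniteDimensional.proper ℂ E
  have himage : numericalRange T = (fun x => inner ℂ x (T x)) '' Metric.sphere 0 1 := by
    ext z
    simp [numericalRange]
  rw [himage]
  have := T.continuous_of_finiteDimensional
  exact (isCompact_sphere 0 1).image (by fun_prop)

end NumericalRange

lemma exists_mul_re_pos_of_zero_notMem {s : Set ℂ} (hconv : Convex ℝ s) (hclosed : IsClosed s)
    (h0 : 0 ∉ s) : ∃ c ≠ 0, ∀ z ∈ s, 0 < (c * z).re := by
  obtain rfl | ⟨z, hz⟩ := s.eq_empty_or_nonempty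
  · exact ⟨1, one_ne_zero, by simp⟩
  obtain ⟨f, u, hu, hf⟩ := RCLike.geometric_hahn_banach_point_closed (𝕜 := ℂ) hconv hclosed h0
  rw [map_zero, map_zero] at hu
  have hpos : ∀ z ∈ s, 0 < (f 1 * z).re := fun z hz => by
    have hfz : f z = f 1 * z := by simpa [mul_comm] using f.map_smul z 1
    exact hfz ▸ hu.trans (hf z hz)
  exact ⟨f 1, fun h => by simpa [h] using hpos z hz, hpos⟩

open scoped MatrixOrder in
lemma exists_simultaneous_diagonalization {𝕜 m : Type*} [RCLike 𝕜] [Fintype m] [DecidableEq m]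
    {H K : Matrix m m 𝕜} (hH : H.PosDef) (hK : K.IsHermitian) :
    ∃ (T : Matrix m m 𝕜) (l : m → ℝ), IsUnit T ∧ H = Tᴴ * T ∧
      K = Tᴴ * diagonal (RCLike.ofReal ∘ l) * T := by
  obtain ⟨R, hR, rfl⟩ :=
    CStarAlgebra.isStrictlyPositive_iff_eq_star_mul_self.1 hH.isStrictlyPositive
  have hdet := (isUnit_iff_isUnit_det _).1 hR
  have hL : ((R⁻¹)ᴴ * K * R⁻¹).IsHermitian := isHermitian_conjTranspose_mul_mul _ hK
  let U : Matrix m m 𝕜 := (hL.eigenvectorUnitary : Matrix m m 𝕜)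
  let D : Matrix m m 𝕜 := diagonal (RCLike.ofReal ∘ hL.eigenvalues)
  have hU : U * Uᴴ = 1 := Unitary.coe_mul_star_self hL.eigenvectorUnitary
  have hspec : (R⁻¹)ᴴ * K * R⁻¹ = U * D * Uᴴ := hL.spectral_theorem
  refine ⟨Uᴴ * R, hL.eigenvalues, (IsUnit.of_mul_eq_one_right _ hU).mul hR, ?_, ?_⟩
  · rw [conjTranspose_mul, conjTranspose_conjTranspose, Matrix.mul_assoc, ← Matrix.mul_assoc U,
      hU, Matrix.one_mul, star_eq_conjTranspose]
  · calc K = (Rᴴ * (R⁻¹)ᴴ) * K * (R⁻¹ * R) := by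
          rw [← conjTranspose_mul, nonsing_inv_mul _ hdet, conjTranspose_one, Matrix.one_mul,
            Matrix.mul_one]
      _ = Rᴴ * ((R⁻¹)ᴴ * K * R⁻¹) * R := by simp only [Matrix.mul_assoc]
      _ = (Uᴴ * R)ᴴ * D * (Uᴴ * R) := by
          rw [hspec, conjTranspose_mul, conjTranspose_conjTranspose]
          simp only [Matrix.mul_assoc]

lemma exists_ne_zero_mulVec_eq_zero_of_card_lt {K m ι : Type*} [Field K] [Fintype m] [Fintype ι]
    (M : Matrix m ι K) (h : Fintype.card m < Fintype.card ι) : ∃ x ≠ 0, M *ᵥ x = 0 := by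
  have hker : M.mulVecLin.ker ≠ ⊥ := LinearMap.ker_ne_bot_of_finrank_lt (by simpa using h)
  obtain ⟨x, hx, hx0⟩ := (Submodule.ne_bot_iff _).1 hker
  exact ⟨x, hx0, hx⟩

lemma iSup_sub_iInf_lt {ι : Type*} [Finite ι] [Nonempty ι] {f : ι → ℝ} {c : ℝ}
    (h : ∀ i j, f i - f j < c) : (⨆ i, f i) - ⨅ i, f i < c := by
  obtain ⟨i, hi⟩ := exists_eq_ciSup_of_finite (f := f)
  obtain ⟨j, hj⟩ := exists_eq_ciInf_of_finite (f := f)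
  exact hi ▸ hj ▸ h i j

lemma mem_Icc_iInf_iSup {ι : Type*} [Finite ι] (f : ι → ℝ) (i : ι) :
    f i ∈ Set.Icc (⨅ i, f i) (⨆ i, f i) :=
  ⟨ciInf_le (Set.finite_range f).bddBelow i, le_ciSup (Set.finite_range f).bddAbove i⟩

lemma exists_mul_re_dotProduct_mulVec_pos {A : Matrix (Fin n) (Fin n) ℂ} (hA : IsSectorial A) :
    ∃ c : ℂ, c ≠ 0 ∧ ∀ x ≠ 0, 0 < (c * (star x ⬝ᵥ A *ᵥ x)).re := by
  have hinner (x : EuclideanSpace ℂ (Fin n)) :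
      inner ℂ x (toEuclideanLin A x) = star x.ofLp ⬝ᵥ A *ᵥ x.ofLp := by
    rw [EuclideanSpace.inner_eq_star_dotProduct, dotProduct_comm]
    rfl
  have h0 : (0 : ℂ) ∉ numericalRange (toEuclideanLin A) := by
    rintro ⟨x, hx, hx0⟩
    refine hA x.ofLp ?_ (hinner x ▸ hx0)
    rw [dotProduct_comm, ← EuclideanSpace.inner_eq_star_dotProduct, inner_self_eq_norm_sq_to_K, hx]
    simp
  obtain ⟨c, hc, hpos⟩ := exists_mul_re_pos_of_zero_notMem
    (convex_numericalRange (toEuclideanLin A)) (isCompact_numericalRange _).isClosed h0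
  refine ⟨c, hc, fun x hx => ?_⟩
  have hx' : WithLp.toLp 2 x ≠ 0 := by simpa using hx
  have := hpos _ (inner_div_norm_sq_mem_numericalRange _ hx')
  rw [hinner, ← mul_div_assoc, ← Complex.ofReal_pow, Complex.div_ofReal_re] at this
  exact (div_pos_iff_of_pos_right (pow_pos (norm_pos_iff.2 hx') 2)).1 this

open scoped ComplexStarModule in
lemma exists_congr_diagonal_one_add_I_mul {m : Type*} [Fintype m] [DecidableEq m]
    {A : Matrix m m ℂ} (hA : ∀ x ≠ 0, 0 < (star x ⬝ᵥ A *ᵥ x).re) :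
    ∃ (T : Matrix m m ℂ) (l : m → ℝ), IsUnit T ∧
      A = Tᴴ * diagonal (fun j => 1 + Complex.I * (l j : ℂ)) * T := by
  have hadd : (ℜ A : Matrix m m ℂ) + Complex.I • (ℑ A : Matrix m m ℂ) = A :=
    realPart_add_I_smul_imaginaryPart A
  have hre : (ℜ A : Matrix m m ℂ).PosDef := by
    refine .of_dotProduct_mulVec_pos (ℜ A).2 fun x hx => ?_
    have hconj : star x ⬝ᵥ Aᴴ *ᵥ x = star (star x ⬝ᵥ A *ᵥ x) := by
      rw [star_dotProduct, star_mulVec, dotProduct_mulVec, conjTranspose_conjTranspose]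
    have hform : star x ⬝ᵥ (ℜ A : Matrix m m ℂ) *ᵥ x = ((star x ⬝ᵥ A *ᵥ x).re : ℂ) := by
      rw [realPart_apply_coe, star_eq_conjTranspose, smul_mulVec, dotProduct_smul, add_mulVec,
        dotProduct_add, hconj, Complex.re_eq_add_conj, Complex.real_smul, RCLike.star_def]
      push_cast
      ring
    rw [hform]
    exact_mod_cast hA x hx
  obtain ⟨T, l, hT, hH, hK⟩ := exists_simultaneous_diagonalization hre (ℑ A).2
  refine ⟨T, l, hT, ?_⟩
  have hdiag : diagonal (fun j => 1 + Complex.I * (l j : ℂ)) =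
      1 + Complex.I • diagonal (RCLike.ofReal ∘ l) := by
    rw [← diagonal_one, ← diagonal_smul, diagonal_add]
    rfl
  rw [hdiag, Matrix.mul_add, Matrix.add_mul, Matrix.mul_one, Matrix.mul_smul, Matrix.smul_mul,
    ← hH, ← hK, hadd]

section SectorialDecomp

variable {A B E S T : Matrix (Fin n) (Fin n) ℂ} {φ ψ γ : Fin n → ℝ} {a b : ℝ} {x : Fin n → ℂ}

lemma phaseDiag_zero : phaseDiag (0 : Fin n → ℝ) = 1 := by
  simp [phaseDiag]

lemma phaseDiag_add (φ ψ : Fin n → ℝ) : phaseDiag (φ + ψ) = phaseDiag φ * phaseDiag ψ := by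
  simp [phaseDiag, diagonal_mul_diagonal, mul_add, Complex.exp_add]

lemma conjTranspose_phaseDiag (φ : Fin n → ℝ) : (phaseDiag φ)ᴴ = phaseDiag (-φ) := by
  rw [phaseDiag, phaseDiag, diagonal_conjTranspose]
  congr 1
  ext j
  simp [← Complex.exp_conj]

lemma inv_phaseDiag (φ : Fin n → ℝ) : (phaseDiag φ)⁻¹ = phaseDiag (-φ) :=
  inv_eq_right_inv (by rw [← phaseDiag_add, add_neg_cancel, phaseDiag_zero])

lemma phaseDiag_add_int_mul_two_pi (φ : Fin n → ℝ) (p : ℤ) :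
    phaseDiag (fun k => φ k + p * (2 * Real.pi)) = phaseDiag φ := by
  unfold phaseDiag
  congr 1
  ext k
  exact Complex.exp_eq_exp_iff_exists_int.2 ⟨p, by push_cast; ring⟩

lemma phaseDiag_mulVec_eq_self (h : ∀ k, x k ≠ 0 → φ k = 0) : phaseDiag φ *ᵥ x = x := by
  ext k
  rw [phaseDiag, mulVec_diagonal]
  obtain hx | hx := eq_or_ne (x k) 0
  · rw [hx, mul_zero]
  · simp [h k hx]

lemma IsSectorialDecomp.inv (h : IsSectorialDecomp E T φ) :
    IsSectorialDecomp E⁻¹ (Tᴴ)⁻¹ (-φ) := by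
  refine ⟨isUnit_nonsing_inv_iff.2 h.1.star, ?_⟩
  rw [h.2, Matrix.mul_inv_rev, Matrix.mul_inv_rev, inv_phaseDiag, conjTranspose_nonsing_inv,
    conjTranspose_conjTranspose, Matrix.mul_assoc]

lemma IsSectorialDecomp.inv_mul_mul_inv (hE : IsSectorialDecomp E T γ)
    (hA : IsSectorialDecomp A T φ) :
    IsSectorialDecomp (E⁻¹ * A * E⁻¹) (Tᴴ)⁻¹ (-γ + φ + -γ) := by
  refine ⟨hE.inv.1, ?_⟩
  have hT : T * ((Tᴴ)⁻¹)ᴴ = 1 := by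
    rw [conjTranspose_nonsing_inv, conjTranspose_conjTranspose,
      mul_nonsing_inv _ ((isUnit_iff_isUnit_det _).1 hE.1)]
  have hT' : (Tᴴ)⁻¹ * Tᴴ = 1 := nonsing_inv_mul _ ((isUnit_iff_isUnit_det _).1 hE.1.star)
  calc E⁻¹ * A * E⁻¹
      = ((Tᴴ)⁻¹)ᴴ * phaseDiag (-γ) * ((Tᴴ)⁻¹ * Tᴴ) * phaseDiag φ * (T * ((Tᴴ)⁻¹)ᴴ) *
          phaseDiag (-γ) * (Tᴴ)⁻¹ := by
        rw [hE.inv.2, hA.2]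
        simp only [Matrix.mul_assoc]
    _ = ((Tᴴ)⁻¹)ᴴ * phaseDiag (-γ + φ + -γ) * (Tᴴ)⁻¹ := by
        rw [hT, hT', phaseDiag_add, phaseDiag_add]
        simp only [Matrix.mul_one, Matrix.mul_assoc]

lemma IsSectorialDecomp.reindex (h : IsSectorialDecomp A T φ) (σ : Equiv.Perm (Fin n)) :
    IsSectorialDecomp A (T.submatrix σ id) (φ ∘ σ) := by
  refine ⟨(isUnit_submatrix_equiv σ (Equiv.refl _)).2 h.1, ?_⟩
  have hdiag : phaseDiag (φ ∘ σ) = (phaseDiag φ).submatrix σ σ :=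
    (submatrix_diagonal_equiv (fun k => Complex.exp (Complex.I * (φ k : ℂ))) σ).symm
  rw [h.2, hdiag, conjTranspose_submatrix, submatrix_mul_equiv, submatrix_mul_equiv]
  simp

lemma isSectorialDecomp_of_congr_diagonal (hT : IsUnit T) {ρ : Fin n → ℝ} (hρ : ∀ j, 0 < ρ j)
    (φ : Fin n → ℝ) :
    IsSectorialDecomp
      (Tᴴ * diagonal (fun j => (ρ j : ℂ) * Complex.exp (Complex.I * (φ j : ℂ))) * T)
      (diagonal (fun j => (√(ρ j) : ℂ)) * T) φ := by
  refine ⟨IsUnit.mul (isUnit_diagonal.2 ?_) hT, ?_⟩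
  · exact Pi.isUnit_iff.2 fun j => isUnit_iff_ne_zero.2 (mod_cast (Real.sqrt_pos.2 (hρ j)).ne')
  · have hdiag : diagonal (fun j => (ρ j : ℂ) * Complex.exp (Complex.I * (φ j : ℂ))) =
        (diagonal fun j => (√(ρ j) : ℂ))ᴴ * phaseDiag φ * diagonal fun j => (√(ρ j) : ℂ) := by
      rw [phaseDiag, diagonal_conjTranspose, diagonal_mul_diagonal, diagonal_mul_diagonal]
      congr 1
      ext j
      have : (√(ρ j) : ℂ) * √(ρ j) = ρ j := mod_cast Real.mul_self_sqrt (hρ j).le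
      simp only [Pi.star_apply, RCLike.star_def, Complex.conj_ofReal]
      linear_combination -Complex.exp (Complex.I * (φ j : ℂ)) * this
    rw [hdiag, conjTranspose_mul]
    simp only [Matrix.mul_assoc]

theorem IsSectorial.exists_isSectorialDecomp (hA : IsSectorial A) :
    ∃ T φ, IsSectorialDecomp A T φ ∧ ∀ i j, φ i - φ j < Real.pi := by
  obtain ⟨c, hc, hpos⟩ := exists_mul_re_dotProduct_mulVec_pos hA
  obtain ⟨T, l, hT, hcA⟩ := exists_congr_diagonal_one_add_I_mul (A := c • A) fun x hx => by
    simpa only [smul_mulVec, dotProduct_smul, smul_eq_mul] using hpos x hx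
  set z : Fin n → ℂ := fun j => 1 + Complex.I * (l j : ℂ) with hz
  have hzre (j : Fin n) : 0 < (z j).re := by simp [hz]
  have hz0 (j : Fin n) : 0 < ‖z j‖ := (hzre j).trans_le (Complex.re_le_norm _)
  have hpolar (j : Fin n) : c⁻¹ * z j =
      (‖z j‖ / ‖c‖ : ℝ) * Complex.exp (Complex.I * ((z j).arg - c.arg : ℝ)) := by
    have hexp : Complex.exp (Complex.I * ((z j).arg - c.arg : ℝ)) =
        Complex.exp ((z j).arg * Complex.I) / Complex.exp (c.arg * Complex.I) := by
      rw [← Complex.exp_sub]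
      congr 1
      push_cast
      ring
    rw [hexp, Complex.ofReal_div, div_mul_div_comm, Complex.norm_mul_exp_arg_mul_I,
      Complex.norm_mul_exp_arg_mul_I, div_eq_inv_mul]
  have hAT : A = Tᴴ * diagonal (fun j => ((‖z j‖ / ‖c‖ : ℝ) : ℂ) *
      Complex.exp (Complex.I * ((z j).arg - c.arg : ℝ))) * T := by
    have hdiag : diagonal (fun j => c⁻¹ * z j) = c⁻¹ • diagonal z := by
      rw [← diagonal_smul]
      rfl
    rw [← funext hpolar, hdiag, Matrix.mul_smul, Matrix.smul_mul, ← hcA, inv_smul_smul₀ hc]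
  refine ⟨_, fun j => (z j).arg - c.arg, hAT ▸ isSectorialDecomp_of_congr_diagonal hT
    (fun j => div_pos (hz0 j) (norm_pos_iff.2 hc)) _, fun i j => ?_⟩
  have hi := (abs_lt.1 (Complex.abs_arg_lt_pi_div_two_iff.2 (.inl (hzre i)))).2
  have hj := (abs_lt.1 (Complex.abs_arg_lt_pi_div_two_iff.2 (.inl (hzre j)))).1
  linarith

lemma IsSectorialDecomp.dotProduct_mulVec (h : IsSectorialDecomp A T φ) (x : Fin n → ℂ) :
    star x ⬝ᵥ A *ᵥ x =
      ∑ j, ((‖(T *ᵥ x) j‖ ^ 2 : ℝ) : ℂ) * Complex.exp (Complex.I * (φ j : ℂ)) := by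
  calc star x ⬝ᵥ A *ᵥ x = star (T *ᵥ x) ⬝ᵥ phaseDiag φ *ᵥ (T *ᵥ x) := by
        rw [h.2, star_mulVec, ← Matrix.dotProduct_mulVec, mulVec_mulVec, mulVec_mulVec]
    _ = _ := by
        simp only [dotProduct, phaseDiag, mulVec_diagonal, Pi.star_apply]
        refine Finset.sum_congr rfl fun j _ => ?_
        rw [Complex.ofReal_pow, ← Complex.conj_mul', RCLike.star_def]
        ring

theorem IsSectorialDecomp.dotProduct_mulVec_mem_sector (h : IsSectorialDecomp A T φ) (hx : x ≠ 0)
    (hab : b - a < Real.pi) (hφ : ∀ j, (T *ᵥ x) j ≠ 0 → φ j ∈ Set.Icc a b) :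
    star x ⬝ᵥ A *ᵥ x ∈ sector a b := by
  have hTx : T *ᵥ x ≠ 0 := fun h0 =>
    hx (mulVec_injective_of_isUnit h.1 (h0.trans (mulVec_zero T).symm))
  obtain ⟨i, hi⟩ := Function.ne_iff.1 hTx
  rw [h.dotProduct_mulVec]
  refine sum_mul_exp_mem_sector hab (fun j _ => by positivity) ⟨i, Finset.mem_univ i, ?_⟩
    fun j _ hj => hφ j fun h0 => ?_
  · exact pow_pos (norm_pos_iff.2 hi) 2
  · simp [h0] at hj

lemma IsSectorialDecomp.isUnit (h : IsSectorialDecomp A T φ) : IsUnit A := by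
  have hφ : IsUnit (phaseDiag φ) := .of_mul_eq_one (phaseDiag (-φ)) <| by
    rw [← phaseDiag_add, add_neg_cancel, phaseDiag_zero]
  exact h.2 ▸ (h.1.star.mul hφ).mul h.1

lemma IsSectorialDecomp.conjTranspose_mulVec_eq (h : IsSectorialDecomp E S ψ)
    (hx : ∀ k, ψ k ≠ 0 → (S *ᵥ x) k = 0) : Eᴴ *ᵥ x = E *ᵥ x := by
  have hψ : phaseDiag ψ *ᵥ (S *ᵥ x) = S *ᵥ x :=
    phaseDiag_mulVec_eq_self fun k => not_imp_comm.1 (hx k)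
  have hψ' : phaseDiag (-ψ) *ᵥ (S *ᵥ x) = S *ᵥ x :=
    phaseDiag_mulVec_eq_self fun k hk => neg_eq_zero.2 (not_imp_comm.1 (hx k) hk)
  calc Eᴴ *ᵥ x = Sᴴ *ᵥ (phaseDiag (-ψ) *ᵥ (S *ᵥ x)) := by
        simp only [h.2, conjTranspose_mul, conjTranspose_conjTranspose, conjTranspose_phaseDiag,
          mulVec_mulVec, Matrix.mul_assoc]
    _ = Sᴴ *ᵥ (phaseDiag ψ *ᵥ (S *ᵥ x)) := by rw [hψ, hψ']
    _ = E *ᵥ x := by simp only [h.2, mulVec_mulVec, Matrix.mul_assoc]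

lemma IsSectorialDecomp.dotProduct_mulVec_mem_sector_iInf_iSup (h : IsSectorialDecomp A T φ)
    (hφ : ∀ i j, φ i - φ j < Real.pi) (hx : x ≠ 0) :
    star x ⬝ᵥ A *ᵥ x ∈ sector (⨅ i, φ i) (⨆ i, φ i) := by
  obtain ⟨i, -⟩ := Function.ne_iff.1 hx
  have : Nonempty (Fin n) := ⟨i⟩
  exact h.dotProduct_mulVec_mem_sector hx (iSup_sub_iInf_lt hφ) fun j _ => mem_Icc_iInf_iSup φ j

lemma IsSectorialDecomp.isSectorial (h : IsSectorialDecomp A T φ)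
    (hφ : ∀ i j, φ i - φ j < Real.pi) : IsSectorial A := by
  intro x hx
  have hx0 : x ≠ 0 := by
    rintro rfl
    simp at hx
  exact ne_zero_of_mem_sector (h.dotProduct_mulVec_mem_sector_iInf_iSup hφ hx0)

/-- A Weyl-type inequality: on the kernel of `P`, the quadratic form of `E B E` is that of `Eᴴ B E`,
that is, the one of `B` evaluated at `E x`. -/
theorem IsSectorialDecomp.apply_le_apply_of_conjTranspose_mulVec_eq {m : Type*} [Fintype m]
    {P : Matrix m (Fin n) ℂ}
    (hA : IsSectorialDecomp (E * B * E) T φ) (hB : IsSectorialDecomp B S ψ) (hE : IsUnit E)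
    (hP : ∀ x, P *ᵥ x = 0 → Eᴴ *ᵥ x = E *ᵥ x) (hφ : Antitone φ) (hψ : Antitone ψ)
    (hφπ : ∀ i j, φ i - φ j < Real.pi) (hψπ : ∀ i j, ψ i - ψ j < Real.pi)
    (hφψ : ∀ i j, |φ i - ψ j| < 2 * Real.pi) {j k : Fin n}
    (hjk : (k : ℕ) + Fintype.card m ≤ j) : φ j ≤ ψ k := by
  let M := fromRows (T.submatrix ((↑) : Finset.Ioi j → Fin n) id)
    (fromRows ((S * E).submatrix ((↑) : Finset.Iio k → Fin n) id) P)
  obtain ⟨x, hx, hMx⟩ := exists_ne_zero_mulVec_eq_zero_of_card_lt M <| by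
    simp only [Fintype.card_sum, Fintype.card_coe, Fin.card_Ioi, Fin.card_Iio, Fintype.card_fin]
    omega
  have hTx (i : Fin n) (hi : (T *ᵥ x) i ≠ 0) : i ≤ j := by
    by_contra! hji
    exact hi (congrFun hMx (.inl ⟨i, Finset.mem_Ioi.2 hji⟩))
  have hSx (i : Fin n) (hi : (S *ᵥ (E *ᵥ x)) i ≠ 0) : k ≤ i := by
    by_contra! hik
    exact hi (mulVec_mulVec x S E ▸ congrFun hMx (.inr (.inl ⟨i, Finset.mem_Iio.2 hik⟩)))
  have hEx : Eᴴ *ᵥ x = E *ᵥ x := hP x (funext fun i => congrFun hMx (.inr (.inr i)))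
  have hEx0 : E *ᵥ x ≠ 0 := fun h0 =>
    hx (mulVec_injective_of_isUnit hE (h0.trans (mulVec_zero E).symm))
  have hform : star x ⬝ᵥ (E * B * E) *ᵥ x = star (E *ᵥ x) ⬝ᵥ B *ᵥ (E *ᵥ x) := by
    rw [← hEx, star_mulVec, conjTranspose_conjTranspose, hEx, ← Matrix.dotProduct_mulVec]
    simp only [mulVec_mulVec, Matrix.mul_assoc]
  have : Nonempty (Fin n) := ⟨j⟩
  obtain ⟨i, hi⟩ := exists_eq_ciSup_of_finite (f := φ)
  obtain ⟨l, hl⟩ := exists_eq_ciInf_of_finite (f := ψ)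
  have hmemA : star x ⬝ᵥ (E * B * E) *ᵥ x ∈ sector (φ j) (⨆ i, φ i) :=
    hA.dotProduct_mulVec_mem_sector hx (hi ▸ hφπ i j)
      fun i hi => ⟨hφ (hTx i hi), (mem_Icc_iInf_iSup φ i).2⟩
  have hmemB : star x ⬝ᵥ (E * B * E) *ᵥ x ∈ sector (⨅ i, ψ i) (ψ k) := hform ▸
    hB.dotProduct_mulVec_mem_sector hEx0 (hl ▸ hψπ k l)
      fun i hi => ⟨(mem_Icc_iInf_iSup ψ i).1, hψ (hSx i hi)⟩
  exact left_le_right_of_mem_sector hmemA hmemB (hi ▸ hl ▸ (abs_lt.1 (hφψ i l)).2)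
    (by linarith [(abs_lt.1 (hφψ j k)).1])

lemma IsSectorialDecomp.le_of_abs_sub_lt (h : IsSectorialDecomp A T φ)
    (h' : IsSectorialDecomp A S ψ) (hφ : Antitone φ) (hψ : Antitone ψ)
    (hφπ : ∀ i j, φ i - φ j < Real.pi) (hψπ : ∀ i j, ψ i - ψ j < Real.pi)
    (hφψ : ∀ i j, |φ i - ψ j| < 2 * Real.pi) : φ ≤ ψ := fun k =>
  IsSectorialDecomp.apply_le_apply_of_conjTranspose_mulVec_eq (E := 1)
    (P := (0 : Matrix Empty (Fin n) ℂ)) (by simpa using h) h' isUnit_one (by simp) hφ hψ hφπ hψπ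
    hφψ (by simp)

theorem IsSectorialDecomp.exists_int_eq_add (h : IsSectorialDecomp A T φ)
    (h' : IsSectorialDecomp A S ψ) (hφ : Antitone φ) (hψ : Antitone ψ)
    (hφπ : ∀ i j, φ i - φ j < Real.pi) (hψπ : ∀ i j, ψ i - ψ j < Real.pi) :
    ∃ p : ℤ, φ = fun k => ψ k + p * (2 * Real.pi) := by
  obtain _ | _ := isEmpty_or_nonempty (Fin n)
  · exact ⟨0, Subsingleton.elim _ _⟩
  obtain ⟨x, hx⟩ := exists_ne (0 : Fin n → ℂ)
  obtain ⟨p, hp⟩ := exists_int_abs_sub_lt_of_mem_sector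
    (h.dotProduct_mulVec_mem_sector_iInf_iSup hφπ hx)
    (h'.dotProduct_mulVec_mem_sector_iInf_iSup hψπ hx) (iSup_sub_iInf_lt hφπ)
    (iSup_sub_iInf_lt hψπ)
  have hφψ (i j : Fin n) : |φ i - (ψ j + p * (2 * Real.pi))| < 2 * Real.pi :=
    hp _ (mem_Icc_iInf_iSup φ i) _ (mem_Icc_iInf_iSup ψ j)
  have h'p : IsSectorialDecomp A S fun k => ψ k + p * (2 * Real.pi) :=
    ⟨h'.1, by rw [phaseDiag_add_int_mul_two_pi, ← h'.2]⟩
  have hψp : Antitone fun k => ψ k + p * (2 * Real.pi) := hψ.add_const _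
  have hψpπ (i j : Fin n) : ψ i + p * (2 * Real.pi) - (ψ j + p * (2 * Real.pi)) < Real.pi := by
    simpa using hψπ i j
  exact ⟨p, le_antisymm (h.le_of_abs_sub_lt h'p hφ hψp hφπ hψpπ hφψ)
    (h'p.le_of_abs_sub_lt h hψp hφ hψpπ hφπ fun i j => abs_sub_comm (φ j) _ ▸ hφψ j i)⟩

end SectorialDecomp

section HalfTruncation

variable {A E : Matrix (Fin n) (Fin n) ℂ} {φ : Fin n → ℝ} {r : ℕ}

/-- The phases of an `r`-half-truncation: those of the matrices in `Sp A r` when `φ = phases A`. -/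
def halfTruncation (φ : Fin n → ℝ) (r : ℕ) : Fin n → ℝ :=
  fun k => if (k : ℕ) < r then φ k / 2 else 0

lemma halfTruncation_mem_Ico (hφ : ∀ k, φ k ∈ Set.Ico 0 Real.pi) (r : ℕ) (k : Fin n) :
    halfTruncation φ r k ∈ Set.Ico 0 Real.pi := by
  obtain ⟨_, _⟩ := hφ k
  rw [halfTruncation]
  split_ifs
  · exact ⟨by linarith, by linarith⟩
  · exact ⟨le_rfl, Real.pi_pos⟩

lemma ncard_halfTruncation_ne_zero_le (φ : Fin n → ℝ) (r : ℕ) :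
    {k | halfTruncation φ r k ≠ 0}.ncard ≤ r := by
  rw [← Set.ncard_image_of_injective _ Fin.val_injective]
  refine (Set.ncard_le_ncard ?_ (Set.finite_Iio r)).trans (Set.ncard_Iio_nat r).le
  rintro _ ⟨k, hk, rfl⟩
  by_contra hkr
  exact hk (if_neg hkr)

lemma neg_halfTruncation_add_add_neg_halfTruncation (φ : Fin n → ℝ) (r : ℕ) :
    -halfTruncation φ r + φ + -halfTruncation φ r =
      fun k : Fin n => if (k : ℕ) < r then 0 else φ k := by
  ext k
  simp only [halfTruncation, Pi.add_apply, Pi.neg_apply]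
  split_ifs <;> ring

lemma iSup_ite_lt_eq (hφ : Antitone φ) (hφ0 : ∀ k, 0 ≤ φ k) (r : ℕ) :
    ⨆ k : Fin n, (if (k : ℕ) < r then 0 else φ k) = if h : r < n then φ ⟨r, h⟩ else 0 := by
  have hnonneg : 0 ≤ if h : r < n then φ ⟨r, h⟩ else 0 := by
    split_ifs with h
    exacts [hφ0 _, le_rfl]
  refine le_antisymm (Real.iSup_le (fun k => ?_) hnonneg) ?_
  · split_ifs with hk hr
    exacts [hφ0 _, le_rfl, hφ (not_lt.1 hk), absurd k.2 (by omega)]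
  · split_ifs with hr
    · simpa using (mem_Icc_iInf_iSup (fun k : Fin n => if (k : ℕ) < r then 0 else φ k) ⟨r, hr⟩).2
    · exact Real.iSup_nonneg fun k => by split_ifs; exacts [le_rfl, hφ0 k]

lemma exists_isSectorialDecomp_halfTruncation_of_mem_Sp (hE : E ∈ Sp A r) :
    ∃ T, IsSectorialDecomp A T (phases A) ∧
      IsSectorialDecomp E T (halfTruncation (phases A) r) := by
  obtain ⟨T, hT, rfl⟩ := hE
  refine ⟨T, hT, hT.1, ?_⟩
  congr 3
  ext k
  simp only [halfTruncation]
  split_ifs <;> simp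

end HalfTruncation

section CanonicalPhases

variable {A E T : Matrix (Fin n) (Fin n) ℂ} {φ ψ : Fin n → ℝ} {r : ℕ}

lemma IsSectorialDecomp.isSectorial_of_mem_Ico (h : IsSectorialDecomp A T φ)
    (hφ : ∀ k, φ k ∈ Set.Ico 0 Real.pi) : IsSectorial A :=
  h.isSectorial fun i j => by linarith [(hφ i).2, (hφ j).1]

lemma IsSectorialDecomp.exists_perm_isCanonicalPhases (h : IsSectorialDecomp A T φ)
    (hφ : ∀ i j, φ i - φ j < Real.pi)
    (hmid : ((⨆ i, φ i) + ⨅ i, φ i) / 2 ∈ Set.Ioc (-Real.pi) Real.pi) :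
    ∃ σ : Equiv.Perm (Fin n), IsCanonicalPhases A (φ ∘ σ) := by
  let σ := Tuple.sort (OrderDual.toDual ∘ φ)
  have hσ : Antitone (φ ∘ σ) := Tuple.monotone_sort (OrderDual.toDual ∘ φ)
  refine ⟨σ, hσ, fun i j => hφ _ _, ?_, ?_, _, h.reindex σ⟩
  · exact (σ.iSup_comp (g := φ)).symm ▸ (σ.iInf_comp (g := φ)).symm ▸ hmid.1
  · exact (σ.iSup_comp (g := φ)).symm ▸ (σ.iInf_comp (g := φ)).symm ▸ hmid.2

variable [NeZero n]

lemma IsCanonicalPhases.unique (h : IsCanonicalPhases A φ) (h' : IsCanonicalPhases A ψ) :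
    φ = ψ := by
  obtain ⟨hφ, hφπ, hlo, hhi, T, hT⟩ := h
  obtain ⟨hψ, hψπ, hlo', hhi', S, hS⟩ := h'
  obtain ⟨p, rfl⟩ := hT.exists_int_eq_add hS hφ hψ hφπ hψπ
  rw [← ciSup_add (Set.finite_range ψ).bddAbove, ← ciInf_add (Set.finite_range ψ).bddBelow]
    at hlo hhi
  have hp_lt : |(p : ℝ)| < 1 :=
    abs_lt.2 ⟨by nlinarith [Real.pi_pos], by nlinarith [Real.pi_pos]⟩
  have hp0 : p = 0 := Int.abs_lt_one_iff.1 (mod_cast hp_lt)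
  simp [hp0]

lemma IsSectorial.exists_isCanonicalPhases (hA : IsSectorial A) : ∃ φ, IsCanonicalPhases A φ := by
  obtain ⟨T, φ, h, hφ⟩ := hA.exists_isSectorialDecomp
  obtain ⟨p, hp, -⟩ := existsUnique_add_zsmul_mem_Ioc Real.two_pi_pos
    (((⨆ i, φ i) + ⨅ i, φ i) / 2) (-Real.pi)
  have hφp : IsSectorialDecomp A T fun k => φ k + p * (2 * Real.pi) :=
    ⟨h.1, by rw [phaseDiag_add_int_mul_two_pi, ← h.2]⟩
  obtain ⟨σ, hσ⟩ := hφp.exists_perm_isCanonicalPhases (by simpa using hφ) <| by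
    rw [← ciSup_add (Set.finite_range φ).bddAbove, ← ciInf_add (Set.finite_range φ).bddBelow]
    have hIoc : -Real.pi + 2 * Real.pi = Real.pi := by ring
    rw [hIoc, zsmul_eq_mul] at hp
    convert hp using 1
    ring
  exact ⟨_, hσ⟩

lemma IsSectorial.isCanonicalPhases_phases (hA : IsSectorial A) :
    IsCanonicalPhases A (phases A) := by
  rw [phases, dif_pos hA.exists_isCanonicalPhases]
  exact hA.exists_isCanonicalPhases.choose_spec

lemma IsCanonicalPhases.phases_eq (h : IsCanonicalPhases A φ) : phases A = φ := by
  rw [phases, dif_pos ⟨φ, h⟩]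
  exact (Exists.choose_spec ⟨φ, h⟩ : IsCanonicalPhases A _).unique h

lemma IsSectorialDecomp.exists_phases_eq_comp (h : IsSectorialDecomp A T φ)
    (hφ : ∀ k, φ k ∈ Set.Ico 0 Real.pi) : ∃ σ : Equiv.Perm (Fin n), phases A = φ ∘ σ := by
  obtain ⟨i, hi⟩ := exists_eq_ciSup_of_finite (f := φ)
  obtain ⟨j, hj⟩ := exists_eq_ciInf_of_finite (f := φ)
  obtain ⟨_, _⟩ := hφ i
  obtain ⟨_, _⟩ := hφ j
  obtain ⟨σ, hσ⟩ := h.exists_perm_isCanonicalPhases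
    (fun i j => by linarith [(hφ i).2, (hφ j).1]) ⟨by linarith, by linarith⟩
  exact ⟨σ, hσ.phases_eq⟩

lemma IsSectorialDecomp.positiveImaginary (h : IsSectorialDecomp A T φ)
    (hφ : ∀ k, φ k ∈ Set.Ico 0 Real.pi) : PositiveImaginary A := by
  obtain ⟨σ, hσ⟩ := h.exists_phases_eq_comp hφ
  exact ⟨h.isSectorial_of_mem_Ico hφ, fun k => hσ ▸ hφ (σ k)⟩

lemma IsSectorialDecomp.phases_zero_eq_iSup (h : IsSectorialDecomp A T φ)
    (hφ : ∀ k, φ k ∈ Set.Ico 0 Real.pi) : phases A 0 = ⨆ k, φ k := by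
  obtain ⟨σ, hσ⟩ := h.exists_phases_eq_comp hφ
  have hanti := (h.positiveImaginary hφ).1.isCanonicalPhases_phases.1
  calc phases A 0 = ⨆ k, phases A k :=
        le_antisymm (mem_Icc_iInf_iSup _ 0).2 (ciSup_le fun k => hanti (Fin.zero_le k))
    _ = ⨆ k, φ k := hσ ▸ σ.iSup_comp (g := φ)

lemma IsSectorialDecomp.prank_eq_ncard (h : IsSectorialDecomp A T φ)
    (hφ : ∀ k, φ k ∈ Set.Ico 0 Real.pi) : prank A = {k | φ k ≠ 0}.ncard := by
  obtain ⟨σ, hσ⟩ := h.exists_phases_eq_comp hφ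
  rw [prank, hσ]
  exact Set.ncard_preimage_of_injective_subset_range (s := {k | φ k ≠ 0}) σ.injective (by simp)

theorem PositiveImaginary.phases_apply_le_phases_inv_mul_mul_inv_apply
    (hA : PositiveImaginary A) (hE : IsSectorial E) (hB : PositiveImaginary (E⁻¹ * A * E⁻¹))
    {j k : Fin n} (hjk : (k : ℕ) + prank E ≤ j) :
    phases A j ≤ phases (E⁻¹ * A * E⁻¹) k := by
  obtain ⟨hφ, hφπ, -, -, T, hT⟩ := hA.1.isCanonicalPhases_phases
  obtain ⟨hψ, hψπ, -, -, S, hS⟩ := hB.1.isCanonicalPhases_phases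
  obtain ⟨-, -, -, -, R, hR⟩ := hE.isCanonicalPhases_phases
  have hdet := (isUnit_iff_isUnit_det _).1 hR.isUnit
  have hAB : E * (E⁻¹ * A * E⁻¹) * E = A := by
    rw [Matrix.mul_assoc E⁻¹, mul_nonsing_inv_cancel_left _ _ hdet,
      nonsing_inv_mul_cancel_right _ _ hdet]
  have hR_herm (x : Fin n → ℂ)
      (hx : R.submatrix ((↑) : {i | phases E i ≠ 0} → Fin n) id *ᵥ x = 0) :
      Eᴴ *ᵥ x = E *ᵥ x :=
    hR.conjTranspose_mulVec_eq fun i hi => congrFun hx ⟨i, hi⟩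
  have hT' : IsSectorialDecomp (E * (E⁻¹ * A * E⁻¹) * E) T (phases A) := ⟨hT.1, hAB.trans hT.2⟩
  refine hT'.apply_le_apply_of_conjTranspose_mulVec_eq hS hR.isUnit hR_herm hφ hψ hφπ hψπ
    (fun i l => ?_) ?_
  · obtain ⟨_, _⟩ := hA.2 i
    obtain ⟨_, _⟩ := hB.2 l
    rw [abs_lt]
    constructor <;> linarith
  · rwa [← Nat.card_eq_fintype_card, Nat.card_coe_set_eq]

lemma nonempty_Sp (hA : IsSectorial A) (r : ℕ) : (Sp A r).Nonempty := by
  obtain ⟨-, -, -, -, T, hT⟩ := hA.isCanonicalPhases_phases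
  exact ⟨_, T, hT, rfl⟩

lemma PositiveImaginary.isSectorial_and_prank_le_of_mem_Sp (hA : PositiveImaginary A)
    (hE : E ∈ Sp A r) : IsSectorial E ∧ prank E ≤ r := by
  obtain ⟨T, -, hT⟩ := exists_isSectorialDecomp_halfTruncation_of_mem_Sp hE
  have hIco := halfTruncation_mem_Ico hA.2 r
  exact ⟨hT.isSectorial_of_mem_Ico hIco,
    (hT.prank_eq_ncard hIco).trans_le (ncard_halfTruncation_ne_zero_le _ r)⟩

lemma PositiveImaginary.inv_mul_mul_inv_of_mem_Sp (hA : PositiveImaginary A) (hE : E ∈ Sp A r) :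
    PositiveImaginary (E⁻¹ * A * E⁻¹) ∧
      phases (E⁻¹ * A * E⁻¹) 0 = if h : r < n then phases A ⟨r, h⟩ else 0 := by
  obtain ⟨T, hAT, hET⟩ := exists_isSectorialDecomp_halfTruncation_of_mem_Sp hE
  have hB := hET.inv_mul_mul_inv hAT
  rw [neg_halfTruncation_add_add_neg_halfTruncation] at hB
  have hIco (k : Fin n) : (if (k : ℕ) < r then 0 else phases A k) ∈ Set.Ico 0 Real.pi := by
    split_ifs
    exacts [⟨le_rfl, Real.pi_pos⟩, hA.2 k]
  exact ⟨hB.positiveImaginary hIco, (hB.phases_zero_eq_iSup hIco).trans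
    (iSup_ite_lt_eq hA.1.isCanonicalPhases_phases.1 (fun k => (hA.2 k).1) r)⟩

end CanonicalPhases

/-- minimization of the largest canonical phase of `E⁻¹AE⁻¹`
(with the convention `φ_{n+1}(A) = 0`). -/
theorem low_prank_approximation_max_phase
    (hn : 1 ≤ n) (A : Matrix (Fin n) (Fin n) ℂ) (hA : PositiveImaginary A)
    (r : ℕ) (hr : r ≤ n) :
    IsLeast {v : ℝ | ∃ E : Matrix (Fin n) (Fin n) ℂ, IsSectorial E ∧ prank E ≤ r ∧
        PositiveImaginary (E⁻¹ * A * E⁻¹) ∧ v = phases (E⁻¹ * A * E⁻¹) ⟨0, hn⟩}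
      (if h : r < n then phases A ⟨r, h⟩ else 0) ∧
    ∀ E ∈ Sp A r, IsSectorial E ∧ prank E ≤ r ∧ PositiveImaginary (E⁻¹ * A * E⁻¹) ∧
      phases (E⁻¹ * A * E⁻¹) ⟨0, hn⟩ = if h : r < n then phases A ⟨r, h⟩ else 0 := by
  have : NeZero n := ⟨by omega⟩
  have hattained : ∀ E ∈ Sp A r, IsSectorial E ∧ prank E ≤ r ∧
      PositiveImaginary (E⁻¹ * A * E⁻¹) ∧
      phases (E⁻¹ * A * E⁻¹) ⟨0, hn⟩ = if h : r < n then phases A ⟨r, h⟩ else 0 := fun E hE =>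
    have ⟨hE_sect, hE_rank⟩ := hA.isSectorial_and_prank_le_of_mem_Sp hE
    ⟨hE_sect, hE_rank, hA.inv_mul_mul_inv_of_mem_Sp hE⟩
  refine ⟨⟨?_, ?_⟩, hattained⟩
  · obtain ⟨E, hE⟩ := nonempty_Sp hA.1 r
    obtain ⟨hE_sect, hE_rank, hB, hphase⟩ := hattained E hE
    exact ⟨E, hE_sect, hE_rank, hB, hphase.symm⟩
  · rintro _ ⟨E, hE_sect, hE_rank, hB, rfl⟩
    split_ifs with hrn
    · exact hA.phases_apply_le_phases_inv_mul_mul_inv_apply hE_sect hB (by simpa using hE_rank)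
    · exact (hB.2 _).1

end LowPrank
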